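/- arXiv:0902.0518 — 2 statements merged into one kernel-verified Lean document; each statement's English description precedes it below -/
import Mathlib

section
/- Let k be a field, A a finite-dimensional k-algebra, and n ≥ 1. Let P_0, …, P_{2^n−1} be indecomposable, non-contractible, bounded cochain complexes of finitely generated projective A-modules with l_c(P_i) ≤ n for all i. If f_i: P_{i−1} → P_i (for 1 ≤ i ≤ 2^n−1) are chain maps whose homotopy classes are irreducible morphisms in K^{-,b}(P), then the composite f_{2^n−1} ∘ ⋯ ∘ f_2 ∘ f_1 is the zero chain map. -/
/-!
Only one consequence of irreducibility in the homotopy category matters: an irreducible morphism is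
not a section up to homotopy, so the chain map representing it is not an isomorphism of complexes.
The theorem is then the Harada–Sai lemma, applied in the abelian category of complexes of
`A`-modules with the length `X ↦ length (⨁ Xⁱ)`, which is additive on short exact sequences
(`isLength_directSum`).

The Harada–Sai bound (`haradaSai`) says that a composite of at least `2 ^ m - 1` non-isomorphisms
between indecomposable objects of length at most `n` has an image of length at most `n - m`. To pass
from `m` to `m + 1`, write the composite as `g ≫ h ≫ f` with `h` a single map and `g`, `f` composites
covered by the bound for `m`. If the image of `g ≫ h ≫ f` is longer than `n - m - 1`, then the images
of `g`, `g ≫ h`, `h ≫ f`, `f` and `g ≫ h ≫ f` all have the same length `n - m > 0`. Hence the source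
of `h` is `im g ⊕ ker (h ≫ f)` and its target is `im (g ≫ h) ⊕ ker f` (`NoSplit.epi_mono`);
indecomposability makes `h ≫ f` mono and `g ≫ h` epi, so `h` is an isomorphism, a contradiction.
At `m = n` the image is zero.
-/


open CategoryTheory Limits DirectSum

variable {k : Type} [Field k] {A : Type} [Ring A] [Algebra k A] [FiniteDimensional k A]

/-- Objects of `Comp^{-,b}(P)`: cochain complexes of finitely generated projective
`A`-modules, bounded above, with bounded homology. -/
def IsCompMinusB (X : CochainComplex (ModuleCat A) ℤ) : Prop :=
  (∀ i, Module.Finite A (X.X i)) ∧ (∀ i, Module.Projective A (X.X i)) ∧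
  (∃ N : ℤ, ∀ i, N ≤ i → IsZero (X.X i)) ∧
  {i : ℤ | ¬ IsZero (X.homology i)}.Finite

/-- A complex is contractible if its identity map is chain homotopic to zero. -/
def IsContractible (Z : CochainComplex (ModuleCat A) ℤ) : Prop :=
  Nonempty (Homotopy (𝟙 Z) (0 : Z ⟶ Z))

/-- A complex is indecomposable if it is nonzero and not isomorphic to a direct sum of
two nonzero complexes. -/
def IndecCx (X : CochainComplex (ModuleCat A) ℤ) : Prop :=
  ¬ IsZero X ∧ ∀ (Y Z : CochainComplex (ModuleCat A) ℤ),
    ¬ IsZero Y → ¬ IsZero Z → IsEmpty (X ≅ Y ⊞ Z)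

/-- `f` is a section (has a left inverse) in `Comp^{-,b}(P)`. -/
def SectionComp {B C : CochainComplex (ModuleCat A) ℤ} (f : B ⟶ C) : Prop :=
  ∃ g : C ⟶ B, f ≫ g = 𝟙 B

/-- `f` is a retraction (has a right inverse) in `Comp^{-,b}(P)`. -/
def RetractionComp {B C : CochainComplex (ModuleCat A) ℤ} (f : B ⟶ C) : Prop :=
  ∃ g : C ⟶ B, g ≫ f = 𝟙 C

/-- The homotopy class of `f` is a section (has a left inverse) in `K^{-,b}(P)`. -/
def SectionK {B C : CochainComplex (ModuleCat A) ℤ} (f : B ⟶ C) : Prop :=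
  ∃ g : C ⟶ B, Nonempty (Homotopy (f ≫ g) (𝟙 B))

/-- The homotopy class of `f` is a retraction (has a right inverse) in `K^{-,b}(P)`. -/
def RetractionK {B C : CochainComplex (ModuleCat A) ℤ} (f : B ⟶ C) : Prop :=
  ∃ g : C ⟶ B, Nonempty (Homotopy (g ≫ f) (𝟙 C))

/-- `f` is irreducible in `Comp^{-,b}(P)`. -/
def IrreducibleComp {B C : CochainComplex (ModuleCat A) ℤ} (f : B ⟶ C) : Prop :=
  ¬ SectionComp f ∧ ¬ RetractionComp f ∧
  ∀ D : CochainComplex (ModuleCat A) ℤ, IsCompMinusB D →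
    ∀ (h : B ⟶ D) (g : D ⟶ C), h ≫ g = f → SectionComp h ∨ RetractionComp g

/-- The homotopy class of `f` is irreducible in `K^{-,b}(P)`. -/
def IrreducibleK {B C : CochainComplex (ModuleCat A) ℤ} (f : B ⟶ C) : Prop :=
  ¬ SectionK f ∧ ¬ RetractionK f ∧
  ∀ D : CochainComplex (ModuleCat A) ℤ, IsCompMinusB D →
    ∀ (h : B ⟶ D) (g : D ⟶ C), Nonempty (Homotopy (h ≫ g) f) →
      SectionK h ∨ RetractionK g

/-- `l_c(X) ≤ n`: the module `⊕ᵢ Xⁱ` has a composition series of length at most `n`. -/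
def lcLE (X : CochainComplex (ModuleCat A) ℤ) (n : ℕ) : Prop :=
  ∃ s : CompositionSeries (Submodule A (⨁ i : ℤ, X.X i)),
    s.head = ⊥ ∧ s.last = ⊤ ∧ s.length ≤ n

/-- The composite of the first `m` maps of a sequence of composable morphisms. -/
def compChain (P : ℕ → CochainComplex (ModuleCat A) ℤ)
    (g : ∀ i, P i ⟶ P (i + 1)) : ∀ m : ℕ, (P 0 ⟶ P m)
  | 0 => 𝟙 (P 0)
  | (m + 1) => compChain P g m ≫ g m

/-! ### The Harada–Sai lemma in an abelian category with a length -/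

section HaradaSai

universe v u

variable {C : Type u} [Category.{v} C] [Abelian C]

/-- An additive length on an abelian category: an `ℕ∞`-valued function on objects that is
additive on short exact sequences and vanishes only on zero objects. -/
structure IsLength (L : C → ℕ∞) : Prop where
  add : ∀ S : ShortComplex C, S.ShortExact → L S.X₂ = L S.X₁ + L S.X₃
  eq_zero_iff : ∀ X, L X = 0 ↔ IsZero X

namespace IsLength

variable {L : C → ℕ∞} (hL : IsLength L)
include hL

lemma mono {X Y : C} (f : X ⟶ Y) [Mono f] : L Y = L X + L (cokernel f) :=
  hL.add (ShortComplex.mk f (cokernel.π f) (by simp))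
    { exact := ShortComplex.exact_cokernel f }

lemma epi {X Y : C} (f : X ⟶ Y) [Epi f] : L X = L (kernel f) + L Y :=
  hL.add (ShortComplex.mk (kernel.ι f) f (by simp))
    { exact := ShortComplex.exact_kernel f }

lemma le_of_mono {X Y : C} (f : X ⟶ Y) [Mono f] : L X ≤ L Y := by
  rw [hL.mono f]; exact le_self_add

lemma le_of_epi {X Y : C} (f : X ⟶ Y) [Epi f] : L Y ≤ L X := by
  rw [hL.epi f]; exact le_add_self

lemma epi_of_mono {X Y : C} (f : X ⟶ Y) [Mono f] (hY : L Y ≤ L X) (hX : L X ≠ ⊤) : Epi f := by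
  have h := hL.mono f
  have : L (cokernel f) = 0 := by
    have h2 : L X + L (cokernel f) ≤ L X + 0 := by rw [← h, add_zero]; exact hY
    exact le_antisymm ((ENat.add_le_add_iff_left hX).1 h2) bot_le
  exact Preadditive.epi_of_isZero_cokernel f ((hL.eq_zero_iff _).1 this)

lemma mono_of_epi {X Y : C} (f : X ⟶ Y) [Epi f] (hX : L X ≤ L Y) (hY : L Y ≠ ⊤) : Mono f := by
  have h := hL.epi f
  have : L (kernel f) = 0 := by
    have h2 : L (kernel f) + L Y ≤ 0 + L Y := by rw [← h, zero_add]; exact hX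
    exact le_antisymm ((ENat.add_le_add_iff_right hY).1 h2) bot_le
  exact Preadditive.mono_of_isZero_kernel f ((hL.eq_zero_iff _).1 this)

/-- The length of the image of a morphism factoring through `I` is at most that of `I`. -/
lemma image_le_of_fac {X Y I : C} (e : X ⟶ I) (m : I ⟶ Y) : L (image (e ≫ m)) ≤ L I :=
  calc L (image (e ≫ m)) ≤ L (image m) := hL.le_of_mono (image.preComp e m)
    _ ≤ L I := hL.le_of_epi (factorThruImage m)

lemma image_comp_le_left {X Y Z : C} (f : X ⟶ Y) (g : Y ⟶ Z) :
    L (image (f ≫ g)) ≤ L (image f) := by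
  have h := hL.image_le_of_fac (factorThruImage f) (image.ι f ≫ g)
  rwa [image.fac_assoc] at h

lemma image_comp_le_right {X Y Z : C} (f : X ⟶ Y) (g : Y ⟶ Z) :
    L (image (f ≫ g)) ≤ L (image g) :=
  hL.le_of_mono (image.preComp f g)

/-- If `g ≫ h` has an image as long as those of `g` and of `h`, and this common length is finite,
then the canonical map `image g ⟶ image h` is an isomorphism. -/
lemma isIso_image_map {X Y W : C} (g : X ⟶ Y) (h : Y ⟶ W)
    (h₁ : L (image g) ≤ L (image (g ≫ h))) (h₂ : L (image h) ≤ L (image (g ≫ h)))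
    (hfin : L (image (g ≫ h)) ≠ ⊤) :
    IsIso (image.ι g ≫ factorThruImage h) := by
  set w := image.ι g ≫ factorThruImage h with hw
  have key : L (image (g ≫ h)) ≤ L (image w) := by
    have e := hL.image_le_of_fac (factorThruImage g ≫ factorThruImage w) (image.ι w ≫ image.ι h)
    have : (factorThruImage g ≫ factorThruImage w) ≫ image.ι w ≫ image.ι h = g ≫ h := by
      simp [hw]
    rwa [this] at e
  have a₁ : L (image w) ≠ ⊤ := ne_top_of_le_ne_top hfin
    ((hL.le_of_epi (factorThruImage w)).trans h₁)
  have : Mono (factorThruImage w) := hL.mono_of_epi _ (h₁.trans key) a₁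
  have : Epi (image.ι w) := hL.epi_of_mono _ (h₂.trans key) a₁
  have m : Mono (factorThruImage w ≫ image.ι w) := mono_comp _ _
  have e : Epi (factorThruImage w ≫ image.ι w) := epi_comp _ _
  rw [image.fac] at m e
  exact isIso_of_mono_of_epi w

end IsLength

/-- `X` is not a direct sum of two nonzero objects. Unlike indecomposability, this allows `X` to be
zero. -/
def NoSplit (X : C) : Prop :=
  ∀ Y Z : C, ¬ IsZero Y → ¬ IsZero Z → IsEmpty (X ≅ Y ⊞ Z)

/-- A split epimorphism onto a nonzero object from an object without nontrivial direct sum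
decomposition is a monomorphism. -/
lemma NoSplit.mono {X Y : C} (hX : NoSplit X) (p : X ⟶ Y) (s : Y ⟶ X) (hs : s ≫ p = 𝟙 Y)
    (hY : ¬ IsZero Y) : Mono p := by
  have : IsSplitEpi p := ⟨⟨s, hs⟩⟩
  by_contra hp
  have hk : ¬ IsZero (kernel p) := fun h => hp (Preadditive.mono_of_isZero_kernel p h)
  let S := ShortComplex.mk (kernel.ι p) p (by simp)
  let σ : S.Splitting :=
    ShortComplex.Splitting.ofExactOfSection S (ShortComplex.exact_kernel p) s hs inferInstance
  exact (hX _ _ hk hY).false (σ.isoBinaryBiproduct)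

/-- If the composite `X ⟶ Y ⟶ W` has a nonzero image as long as those of both factors, then
`Y = im g ⊕ ker h`; when `Y` does not decompose, `g` is epi and `h` is mono. -/
lemma NoSplit.epi_mono {L : C → ℕ∞} (hL : IsLength L) {X Y W : C} (hY : NoSplit Y)
    (g : X ⟶ Y) (h : Y ⟶ W)
    (h₁ : L (image g) ≤ L (image (g ≫ h))) (h₂ : L (image h) ≤ L (image (g ≫ h)))
    (hfin : L (image (g ≫ h)) ≠ ⊤) (hne : g ≫ h ≠ 0) : Epi g ∧ Mono h := by
  have hw := hL.isIso_image_map g h h₁ h₂ hfin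
  have hz : ¬ IsZero (image h) := fun hz => hne <| by
    rw [← image.fac h, hz.eq_of_tgt (factorThruImage h) 0]; simp
  have hm : Mono (factorThruImage h) :=
    hY.mono _ (inv (image.ι g ≫ factorThruImage h) ≫ image.ι g) (by simp) hz
  have : IsIso (factorThruImage h) := isIso_of_mono_of_epi _
  have : IsIso (image.ι g) := IsIso.of_isIso_comp_right _ (factorThruImage h)
  constructor
  · rw [← image.fac g]; exact epi_comp _ _
  · rw [← image.fac h]; exact mono_comp _ _

/-- The Harada–Sai bound: along a chain of non-isomorphisms between indecomposable objects of
length at most `n`, the image of a composite of at least `2 ^ m - 1` steps has length at most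
`n - m`. -/
lemma haradaSai {L : C → ℕ∞} (hL : IsLength L) (F : ℕ ⥤ C) (n N : ℕ)
    (hF : ∀ i ≤ N, NoSplit (F.obj i)) (hlen : ∀ i ≤ N, L (F.obj i) ≤ n)
    (hiso : ∀ i < N, ¬ IsIso (F.map (homOfLE (Nat.le_add_right i 1)))) (m : ℕ) :
    ∀ (a b : ℕ) (hab : a ≤ b), b ≤ N → a + 2 ^ m ≤ b + 1 →
      L (image (F.map (homOfLE hab))) ≤ (n - m : ℕ) := by
  induction m with
  | zero =>
    intro a b hab hb _
    exact (hL.le_of_epi (factorThruImage _)).trans (hlen a (hab.trans hb))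
  | succ m ih =>
    intro a b hab hb hm
    have hpos : 1 ≤ 2 ^ m := Nat.one_le_two_pow
    rw [pow_succ] at hm
    -- the middle step `c ⟶ c + 1` has a composite of at least `2 ^ m - 1` steps on either side
    obtain ⟨c, hc⟩ : ∃ c, c = a + 2 ^ m - 1 := ⟨_, rfl⟩
    have hac : a ≤ c := by omega
    have hcb : c + 1 ≤ b := by omega
    let g := F.map (homOfLE hac)
    let h := F.map (homOfLE (Nat.le_add_right c 1))
    let f := F.map (homOfLE hcb)
    have hg : L (image g) ≤ (n - m : ℕ) := ih a c hac (by omega) (by omega)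
    have hf : L (image f) ≤ (n - m : ℕ) := ih (c + 1) b hcb hb (by omega)
    have hfac : F.map (homOfLE hab) = g ≫ h ≫ f := by
      simp only [g, h, f, ← F.map_comp]; rfl
    rw [hfac]
    by_contra! hlt
    have hge : ((n - m : ℕ) : ℕ∞) ≤ L (image (g ≫ h ≫ f)) := by
      have := Order.add_one_le_of_lt hlt
      refine le_trans ?_ this
      exact_mod_cast (by omega : n - m ≤ n - (m + 1) + 1)
    have hle : L (image (g ≫ h ≫ f)) ≤ (n - m : ℕ) := (hL.image_comp_le_left _ _).trans hg
    have hfin : L (image (g ≫ h ≫ f)) ≠ ⊤ := ne_top_of_le_ne_top (ENat.natCast_ne_top _) hle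
    have hne : g ≫ h ≫ f ≠ 0 := by
      intro h0
      have hz : L (image (g ≫ h ≫ f)) = 0 :=
        (hL.eq_zero_iff _).2 (by rw [h0]; exact (isZero_zero C).of_iso imageZero)
      rw [hz] at hlt
      exact not_lt_bot hlt
    have e₁ := (hF c (by omega)).epi_mono hL g (h ≫ f) (hg.trans hge)
      (((hL.image_comp_le_right _ _).trans hf).trans hge) hfin hne
    have hassoc : (g ≫ h) ≫ f = g ≫ h ≫ f := Category.assoc _ _ _
    have e₂ := (hF (c + 1) (by omega)).epi_mono hL (g ≫ h) f
      (by rw [hassoc]; exact ((hL.image_comp_le_left _ _).trans hg).trans hge)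
      (by rw [hassoc]; exact hf.trans hge) (by rwa [hassoc]) (by rwa [hassoc])
    have : Mono (h ≫ f) := e₁.2
    have : Epi (g ≫ h) := e₂.1
    have : Mono h := mono_of_mono h f
    have : Epi h := epi_of_epi g h
    exact hiso c (by omega) (isIso_of_mono_of_epi h)

end HaradaSai

/-! ### The length of a complex of modules -/

section Complexes

universe w

variable {R : Type} [Ring R]

/-- The length of the total module `⨁ Xⁱ` is an additive length on complexes, because direct sums
of modules are exact. -/
lemma isLength_directSum :
    IsLength (fun X : CochainComplex (ModuleCat.{w} R) ℤ => Module.length R (⨁ i : ℤ, X.X i)) where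
  add S hS := by
    have hd : ∀ i : ℤ, (S.map (HomologicalComplex.eval _ _ i)).ShortExact := fun i =>
      hS.map_of_exact (HomologicalComplex.eval _ _ i)
    refine Module.length_eq_add_of_exact
      (DirectSum.lmap fun i => (S.f.f i).hom) (DirectSum.lmap fun i => (S.g.f i).hom)
      ((DirectSum.lmap_injective _).2 fun i => (hd i).moduleCat_injective_f)
      ((DirectSum.lmap_surjective _).2 fun i => (hd i).moduleCat_surjective_g) ?_
    rw [LinearMap.exact_iff, DirectSum.ker_lmap, DirectSum.range_lmap]
    congr 2
    funext i
    exact (hd i).exact.moduleCat_range_eq_ker.symm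
  eq_zero_iff X := by
    rw [Module.length_eq_zero_iff]
    constructor
    · intro hX
      have hi : ∀ i, IsZero (X.X i) := fun i => by
        have : Subsingleton (X.X i) :=
          (DirectSum.of_injective (β := fun i : ℤ => X.X i) i).subsingleton
        exact ModuleCat.isZero_of_subsingleton _
      rw [IsZero.iff_id_eq_zero]
      ext1 i
      exact (hi i).eq_of_src _ _
    · intro hX
      have hi : ∀ i, Subsingleton (X.X i) := fun i =>
        ModuleCat.subsingleton_of_isZero
          ((HomologicalComplex.eval (ModuleCat R) (ComplexShape.up ℤ) i).map_isZero hX)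
      exact ⟨fun x y => DFinsupp.ext fun i => Subsingleton.elim _ _⟩

lemma lcLE.length_le {X : CochainComplex (ModuleCat.{w} R) ℤ} {n : ℕ} (h : lcLE X n) :
    Module.length R (⨁ i : ℤ, X.X i) ≤ n := by
  obtain ⟨s, h₁, h₂, h₃⟩ := h
  rw [← Module.length_compositionSeries s h₁ h₂]
  exact_mod_cast h₃

lemma IrreducibleK.not_isIso {B D : CochainComplex (ModuleCat.{w} R) ℤ} {f : B ⟶ D}
    (hf : IrreducibleK f) : ¬ IsIso f := fun _ =>
  hf.1 ⟨inv f, ⟨Homotopy.ofEq (by simp)⟩⟩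

lemma compChain_eq_map (P : ℕ → CochainComplex (ModuleCat.{w} R) ℤ)
    (f : ∀ i, P i ⟶ P (i + 1)) (m : ℕ) :
    compChain P f m = (Functor.ofSequence f).map (homOfLE (Nat.zero_le m)) := by
  induction m with
  | zero => exact ((Functor.ofSequence f).map_id 0).symm
  | succ m ih =>
    rw [compChain, ih, ← Functor.ofSequence_map_homOfLE_succ f m]
    exact ((Functor.ofSequence f).map_comp (homOfLE (Nat.zero_le m))
      (homOfLE (Nat.le_add_right m 1))).symm

end Complexes

/-- If `P_0, …, P_{2^n-1}` are indecomposable non-contractible bounded complexes of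
finitely generated projective `A`-modules with `l_c(P_i) ≤ n`, and the homotopy classes
of the chain maps `f_i : P_{i-1} ⟶ P_i` are irreducible in `K^{-,b}(P)`, then
`f_{2^n-1} ∘ ⋯ ∘ f_1` is the zero chain map. -/
theorem comp_of_irreducibles_eq_zero
    (n : ℕ) (hn : 1 ≤ n)
    (P : ℕ → CochainComplex (ModuleCat A) ℤ)
    (hPbdd : ∀ i, i ≤ 2 ^ n - 1 → {j : ℤ | ¬ IsZero ((P i).X j)}.Finite)
    (hPfin : ∀ i, i ≤ 2 ^ n - 1 → ∀ j : ℤ, Module.Finite A ((P i).X j))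
    (hPproj : ∀ i, i ≤ 2 ^ n - 1 → ∀ j : ℤ, Module.Projective A ((P i).X j))
    (hPind : ∀ i, i ≤ 2 ^ n - 1 → IndecCx (P i))
    (hPnc : ∀ i, i ≤ 2 ^ n - 1 → ¬ IsContractible (P i))
    (hlc : ∀ i, i ≤ 2 ^ n - 1 → lcLE (P i) n)
    (f : ∀ i, P i ⟶ P (i + 1))
    (hf : ∀ i, i < 2 ^ n - 1 → IrreducibleK (f i)) :
    compChain P f (2 ^ n - 1) = 0 := by
  have hpos : 1 ≤ 2 ^ n := Nat.one_le_two_pow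
  have h := haradaSai isLength_directSum (Functor.ofSequence f) n (2 ^ n - 1)
    (fun i hi => (hPind i hi).2) (fun i hi => (hlc i hi).length_le)
    (fun i hi => by
      rw [Functor.ofSequence_map_homOfLE_succ]
      exact (hf i hi).not_isIso)
    n 0 (2 ^ n - 1) (Nat.zero_le _) le_rfl (by omega)
  rw [Nat.sub_self, Nat.cast_zero] at h
  rw [compChain_eq_map]
  rw [← image.fac ((Functor.ofSequence f).map _)]
  have hz := (isLength_directSum.eq_zero_iff _).1 (le_antisymm h bot_le)
  rw [hz.eq_of_src (image.ι _) 0]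
  exact comp_zero
end

section
/- Let k be a field and A a finite-dimensional k-algebra that is indecomposable as an algebra (not isomorphic to a product of two nonzero k-algebras). If there exists an Auslander-Reiten sequence 0 → E → C → P → 0 in Comp^{-,b}(P) whose middle term C is contractible, then A is a simple algebra (A has no two-sided ideals other than 0 and A). -/
/-!
Composing with a contraction of `C` shows that every map `M → P` which is not a retraction is
null-homotopic, since it factors through `C`. The complex `P` is not acyclic: it would then be
contractible, being a bounded above complex of projectives, and the sequence would split
(`retractionComp_of_isContractible`). The property of maps into `P` is then tested on three kinds
of complexes.

* A nonzero class in `Hⁱ(P)` gives a map from the stalk complex of `A` in degree `i` which is not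
  null-homotopic, hence is a retraction; so `P` is a stalk complex, given by a nonzero projective
  module `Q` in degree `i` (`exists_concentrated`).
* A nonzero map `A → Q` gives a map of stalk complexes which is not null-homotopic, so it has a
  section (`exists_section_of_concentrated`).
* A nonzero map `ψ : Q → A` gives a two-term complex whose canonical map to `P` is not a
  retraction; a null-homotopy of this map is a left inverse of `ψ`
  (`exists_retraction_of_concentrated`).

The rest is ring theory (`isSimpleRing_of_splitting`). Let `I` be the trace ideal of `Q` in `A`, the
sum of the images of all maps `Q → A`. By the splitting of maps `Q → A`, it is a direct summand of
the left module `A`; by the splitting of maps `A → Q`, a complement of it annihilates `Q`. Hence `A`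
is the direct sum of the two-sided ideals `I` and `J = Ann Q`, so it is the product of `A / I` and
`A / J`. As `Q ≠ 0`, indecomposability of `A` forces `I = A` and `J = 0`. Finally `Q` is simple
and faithful, so a nonzero two-sided ideal `T` satisfies `T Q = Q`; thus `T` contains the image of
each map `Q → A`, that is, `T` contains `I = A`.
-/


open CategoryTheory Limits

variable {k : Type} [Field k] {A : Type} [Ring A] [Algebra k A] [FiniteDimensional k A]

/-- `0 → E --u--> C --g--> P → 0` is an Auslander-Reiten sequence in `Comp^{-,b}(P)`:
it is a degreewise short exact sequence which does not split, `E` and `P` are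
indecomposable, and every chain map `M ⟶ P` from an object of `Comp^{-,b}(P)` which is
not a retraction factors through `g`. -/
def IsARSeq {E C P : CochainComplex (ModuleCat A) ℤ} (u : E ⟶ C) (g : C ⟶ P) : Prop :=
  (∀ i : ℤ, Function.Injective (u.f i)) ∧
  (∀ i : ℤ, Function.Surjective (g.f i)) ∧
  (∀ i : ℤ, Function.Exact (u.f i) (g.f i)) ∧
  ¬ RetractionComp g ∧ IndecCx E ∧ IndecCx P ∧
  ∀ M : CochainComplex (ModuleCat A) ℤ, IsCompMinusB M →
    ∀ f : M ⟶ P, ¬ RetractionComp f → ∃ f' : M ⟶ C, f' ≫ g = f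

/-! ### From a simple projective module to simplicity of the ring -/

section RingPart

universe w

variable {A : Type} [Ring A] (Q : Type w) [AddCommGroup Q] [Module A Q]

/-- The trace ideal of `Q` in `A`: the left ideal generated by the images of all `A`-linear
maps `Q → A`. -/
def traceIdeal : Ideal A := ⨆ ψ : Q →ₗ[A] A, LinearMap.range ψ

lemma apply_mem_traceIdeal (ψ : Q →ₗ[A] A) (q : Q) : ψ q ∈ traceIdeal (A := A) Q :=
  Submodule.mem_iSup_of_mem ψ ⟨q, rfl⟩

lemma traceIdeal_le {T : Ideal A} (h : ∀ (ψ : Q →ₗ[A] A) (q : Q), ψ q ∈ T) :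
    traceIdeal Q ≤ T :=
  iSup_le fun ψ => by rintro _ ⟨q, rfl⟩; exact h ψ q

/-- Right multiplication by `b` sends the image of `ψ` into that of `q ↦ ψ q * b`. -/
lemma traceIdeal_isTwoSided : (traceIdeal (A := A) Q).IsTwoSided where
  mul_mem_of_left {a} b ha := by
    have : traceIdeal (A := A) Q ≤
        Submodule.comap (LinearMap.toSpanSingleton A A b) (traceIdeal (A := A) Q) :=
      traceIdeal_le Q fun ψ q =>
        apply_mem_traceIdeal Q ((LinearMap.toSpanSingleton A A b).comp ψ) q
    exact this ha

variable {Q}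

/-- If every nonzero map `Q → A` splits, then the trace ideal of `Q` is a direct summand of the
Artinian left module `A`: a complement `K` of a left ideal `L` contained in the trace ideal,
minimal among all such complements, receives no nonzero map from `Q`. -/
lemma exists_isCompl_traceIdeal [IsArtinianRing A]
    (h₂ : ∀ ψ : Q →ₗ[A] A, ψ ≠ 0 → ∃ h : A →ₗ[A] Q, h ∘ₗ ψ = LinearMap.id) :
    ∃ K : Ideal A, IsCompl (traceIdeal Q) K := by
  obtain ⟨K, ⟨L, hL, hLK⟩, hmin⟩ := IsArtinian.set_has_minimal
    {K : Ideal A | ∃ L : Ideal A, L ≤ traceIdeal Q ∧ IsCompl L K} ⟨⊤, ⊥, bot_le, isCompl_bot_top⟩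
  have hK : ∀ φ : Q →ₗ[A] A, (∀ q, φ q ∈ K) → φ = 0 := by
    intro φ hφ
    by_contra hne
    obtain ⟨h, hh⟩ := h₂ φ hne
    have hh' : ∀ q, h (φ q) = q := fun q => LinearMap.congr_fun hh q
    -- Otherwise the image of `φ` can be moved from `K` to `L`, against minimality.
    refine hmin (K ⊓ LinearMap.ker h) ⟨L ⊔ LinearMap.range φ, sup_le hL ?_, ?_, ?_⟩ ?_
    · rintro _ ⟨q, rfl⟩
      exact apply_mem_traceIdeal Q φ q
    · rw [Submodule.disjoint_def]
      rintro x hx ⟨hxK, hxh⟩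
      obtain ⟨l, hl, _, ⟨q, rfl⟩, rfl⟩ := Submodule.mem_sup.1 hx
      have hl0 : l = 0 := by
        refine (Submodule.disjoint_def.1 hLK.disjoint) l hl ?_
        simpa using K.sub_mem hxK (hφ q)
      subst hl0
      have hq : h (φ q) = 0 := by simpa using hxh
      rw [hh'] at hq
      simp [hq]
    · rw [codisjoint_iff, eq_top_iff]
      intro x _
      obtain ⟨l, hl, y, hy, rfl⟩ := Submodule.mem_sup.1
        (hLK.codisjoint.eq_top.symm ▸ Submodule.mem_top : x ∈ L ⊔ K)
      refine Submodule.mem_sup.2 ⟨l + φ (h y), Submodule.mem_sup.2 ⟨l, hl, _, ⟨_, rfl⟩, rfl⟩,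
        y - φ (h y), ⟨K.sub_mem hy (hφ _), ?_⟩, by abel⟩
      simp [hh']
    · refine lt_of_le_of_ne inf_le_left fun heq => hne ?_
      ext q
      have hmem : φ q ∈ K ⊓ LinearMap.ker h := heq.symm ▸ hφ q
      have : h (φ q) = 0 := hmem.2
      rw [hh'] at this
      simp [this]
  have : traceIdeal Q ≤ L := traceIdeal_le Q fun ψ q => by
    have h0 := hK (K.subtype ∘ₗ (K.projectionOnto L hLK.symm) ∘ₗ ψ) fun q => Subtype.property _
    rw [← Submodule.projectionOnto_apply_eq_zero_iff hLK.symm]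
    exact Subtype.ext (LinearMap.congr_fun h0 q)
  exact ⟨K, le_antisymm hL this ▸ hLK⟩

/-- Any complement of the trace ideal annihilates `Q` as soon as every nonzero map `A → Q` has a
section: a map `A → Q` killing the trace ideal has none. -/
lemma smul_eq_zero_of_isCompl [Nontrivial Q]
    (h₁ : ∀ θ : A →ₗ[A] Q, θ ≠ 0 → ∃ s : Q →ₗ[A] A, θ ∘ₗ s = LinearMap.id)
    {K : Ideal A} (hK : IsCompl (traceIdeal Q) K) {x : A} (hx : x ∈ K) (q : Q) : x • q = 0 := by
  set θ : A →ₗ[A] Q :=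
    LinearMap.toSpanSingleton A Q q ∘ₗ K.subtype ∘ₗ K.projectionOnto _ hK.symm with hθ
  have hθ0 : θ = 0 := by
    by_contra hne
    obtain ⟨s, hs⟩ := h₁ θ hne
    obtain ⟨p, hp⟩ := exists_ne (0 : Q)
    apply hp
    have h1 : θ (s p) = p := LinearMap.congr_fun hs p
    rw [← h1, hθ]
    have : K.projectionOnto _ hK.symm (s p) = 0 :=
      (Submodule.projectionOnto_apply_eq_zero_iff hK.symm).2 (apply_mem_traceIdeal Q s p)
    simp [this]
  have h2 := LinearMap.congr_fun hθ0 x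
  have h3 : K.projectionOnto _ hK.symm x = ⟨x, hx⟩ :=
    Submodule.projectionOnto_apply_left hK.symm ⟨x, hx⟩
  simpa [hθ, h3] using h2

/-- An algebra, indecomposable as such, is simple if it is Artinian and has a nonzero module `Q`
such that all nonzero maps `A → Q` have a section and all nonzero maps `Q → A` a retraction.
The trace ideal of `Q` and the annihilator of `Q` are then complementary two-sided ideals. -/
lemma isSimpleRing_of_splitting {k : Type} [Field k] [Algebra k A] [IsArtinianRing A]
    (hA : ∀ (B C : Type) [Ring B] [Ring C] [Algebra k B] [Algebra k C],
      Nontrivial B → Nontrivial C → IsEmpty (A ≃ₐ[k] (B × C)))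
    [Nontrivial Q]
    (h₁ : ∀ θ : A →ₗ[A] Q, θ ≠ 0 → ∃ s : Q →ₗ[A] A, θ ∘ₗ s = LinearMap.id)
    (h₂ : ∀ ψ : Q →ₗ[A] A, ψ ≠ 0 → ∃ h : A →ₗ[A] Q, h ∘ₗ ψ = LinearMap.id) :
    IsSimpleRing A := by
  obtain ⟨K, hK⟩ := exists_isCompl_traceIdeal h₂
  have hKQ : ∀ x ∈ K, ∀ q : Q, x • q = 0 := fun x hx q => smul_eq_zero_of_isCompl h₁ hK hx q
  obtain ⟨p, hp⟩ := exists_ne (0 : Q)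
  have : Nontrivial A := by
    refine ⟨0, 1, fun h01 => hp ?_⟩
    rw [← one_smul A p, ← h01, zero_smul]
  have hI2 := traceIdeal_isTwoSided (A := A) Q
  set I : Ideal A := traceIdeal Q with hI
  set J : Ideal A := Module.annihilator A Q with hJ
  have hmul : ∀ x ∈ J, ∀ e ∈ I, x * e = 0 := by
    intro x hx e he
    refine Submodule.iSup_induction (fun ψ : Q →ₗ[A] A => LinearMap.range ψ)
      (motive := fun e => x * e = 0) he ?_ (mul_zero x) ?_
    · rintro ψ _ ⟨q, rfl⟩
      rw [← smul_eq_mul, ← map_smul, Module.mem_annihilator.1 hx q, map_zero]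
    · intro a b ha hb
      rw [mul_add, ha, hb, add_zero]
  have hKJ : K ≤ J := fun x hx => Module.mem_annihilator.2 (hKQ x hx)
  obtain ⟨e, he, f, hf, hef⟩ := Submodule.mem_sup.1
    (hK.codisjoint.eq_top.symm ▸ Submodule.mem_top : (1 : A) ∈ I ⊔ K)
  have hIJ : ∀ x ∈ I, x ∈ J → x = 0 := by
    intro x hxI hxJ
    have hx : x = x * f := by
      conv_lhs => rw [← mul_one x, ← hef, mul_add, hmul x hxJ e he, zero_add]
    refine Submodule.disjoint_def.1 hK.disjoint x hxI ?_
    rw [hx]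
    exact K.mul_mem_left x hf
  have hJtop : J ≠ ⊤ := fun h => hp <| by
    have : (1 : A) ∈ J := h ▸ Submodule.mem_top
    simpa using Module.mem_annihilator.1 this p
  have hItop : I = ⊤ := by
    by_contra hne
    refine (hA (A ⧸ I) (A ⧸ J) (Ideal.Quotient.nontrivial_iff.2 hne)
      (Ideal.Quotient.nontrivial_iff.2 hJtop)).false (AlgEquiv.ofBijective
        ((Ideal.Quotient.mkₐ k I).prod (Ideal.Quotient.mkₐ k J)) ⟨?_, ?_⟩)
    · rw [injective_iff_map_eq_zero]
      intro x hx
      obtain ⟨hx1, hx2⟩ := Prod.ext_iff.1 hx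
      exact hIJ x (Ideal.Quotient.eq_zero_iff_mem.1 hx1) (Ideal.Quotient.eq_zero_iff_mem.1 hx2)
    · rintro ⟨b, c⟩
      obtain ⟨b, rfl⟩ := Ideal.Quotient.mk_surjective b
      obtain ⟨c, rfl⟩ := Ideal.Quotient.mk_surjective c
      -- `e` is `0` modulo `I` and `1` modulo `J`, and vice versa for `f`.
      refine ⟨b * f + c * e, Prod.ext (Ideal.Quotient.eq.2 ?_) (Ideal.Quotient.eq.2 ?_)⟩
      · have : b * f + c * e - b = c * e - b * e := by
          rw [eq_sub_of_add_eq' hef]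
          noncomm_ring
        rw [this]
        exact I.sub_mem (I.mul_mem_left _ he) (I.mul_mem_left _ he)
      · have : b * f + c * e - c = b * f - c * f := by
          rw [eq_sub_of_add_eq hef]
          noncomm_ring
        rw [this]
        exact J.sub_mem (J.mul_mem_left _ (hKJ hf)) (J.mul_mem_left _ (hKJ hf))
  refine isSimpleRing_iff_isTwoSided_imp.2 ⟨inferInstance, fun T hT => ?_⟩
  by_cases hT0 : T = ⊥
  · exact Or.inl hT0
  right
  obtain ⟨x, hxT, hx0⟩ := Submodule.exists_mem_ne_zero_of_ne_bot hT0
  have hxJ : x ∉ J := fun h => hx0 (hIJ x (hItop ▸ Submodule.mem_top) h)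
  obtain ⟨q, hq⟩ : ∃ q : Q, x • q ≠ 0 := by
    by_contra! h
    exact hxJ (Module.mem_annihilator.2 h)
  -- `x • q` generates `Q`, so `Q = T • Q`, and `T` contains the image of every map `Q → A`.
  obtain ⟨s, hs⟩ := h₁ (LinearMap.toSpanSingleton A Q (x • q)) fun h =>
    hq (by simpa using LinearMap.congr_fun h 1)
  rw [eq_top_iff, ← hItop]
  refine traceIdeal_le Q fun ψ q' => ?_
  have h1 : s q' • x • q = q' := LinearMap.congr_fun hs q'
  rw [← h1, map_smul, map_smul, smul_eq_mul, smul_eq_mul]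
  exact T.mul_mem_left _ (hT.mul_mem_of_left _ hxT)

end RingPart

/-! ### Complexes over an Auslander-Reiten sequence with contractible middle term -/

section ComplexPart

universe w

variable {A : Type} [Ring A]

/-- The regular module, lifted to the universe of the modules under consideration. -/
abbrev regularModule (A : Type) [Ring A] : ModuleCat.{w} A := ModuleCat.of A (ULift.{w} A)

lemma isCompMinusB_of_isZero (M : CochainComplex (ModuleCat.{w} A) ℤ) (i j : ℤ)
    (hi : Module.Finite A (M.X i) ∧ Module.Projective A (M.X i))
    (hj : Module.Finite A (M.X j) ∧ Module.Projective A (M.X j))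
    (h0 : ∀ n, n ≠ i → n ≠ j → IsZero (M.X n)) : IsCompMinusB M := by
  have key : ∀ n, Module.Finite A (M.X n) ∧ Module.Projective A (M.X n) := by
    intro n
    by_cases h1 : n = i
    · subst h1; exact hi
    by_cases h2 : n = j
    · subst h2; exact hj
    have := ModuleCat.isZero_iff_subsingleton.1 (h0 n h1 h2)
    exact ⟨inferInstance, inferInstance⟩
  refine ⟨fun n => (key n).1, fun n => (key n).2, ⟨max i j + 1, fun n hn => ?_⟩, ?_⟩
  · exact h0 n (by have := le_max_left i j; lia) (by have := le_max_right i j; lia)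
  · refine (Set.toFinite {i, j}).subset fun n hn => ?_
    by_contra hne
    simp only [Set.mem_insert_iff, Set.mem_singleton_iff, not_or] at hne
    exact hn ((HomologicalComplex.exactAt_iff_isZero_homology _ _).1
      (HomologicalComplex.ExactAt.of_isZero (h0 n hne.1 hne.2)))

lemma finite_projective_of_iso {M N : ModuleCat.{w} A} (e : M ≅ N)
    (h : Module.Finite A N ∧ Module.Projective A N) :
    Module.Finite A M ∧ Module.Projective A M := by
  obtain ⟨_, _⟩ := h
  exact ⟨Module.Finite.equiv e.toLinearEquiv.symm,
    Module.Projective.of_equiv e.toLinearEquiv.symm⟩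

lemma isCompMinusB_single (i : ℤ) :
    IsCompMinusB ((HomologicalComplex.single (ModuleCat.{w} A) (ComplexShape.up ℤ) i).obj
      (regularModule A)) := by
  have h := finite_projective_of_iso (HomologicalComplex.singleObjXSelf (ComplexShape.up ℤ) i
    (regularModule.{w} A)) ⟨inferInstance, Module.Projective.of_equiv ULift.moduleEquiv.symm⟩
  exact isCompMinusB_of_isZero _ i i h h fun n hn _ =>
    HomologicalComplex.isZero_single_obj_X _ _ _ _ hn

lemma isCompMinusB_double {Q S : ModuleCat.{w} A} (ψ : Q ⟶ S) {i j : ℤ}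
    (hij : (ComplexShape.up ℤ).Rel i j) (hne : i ≠ j)
    (hQ : Module.Finite A Q ∧ Module.Projective A Q)
    (hS : Module.Finite A S ∧ Module.Projective A S) :
    IsCompMinusB (HomologicalComplex.double ψ hij) :=
  isCompMinusB_of_isZero _ i j
    (finite_projective_of_iso (HomologicalComplex.doubleXIso₀ ψ hij) hQ)
    (finite_projective_of_iso (HomologicalComplex.doubleXIso₁ ψ hij hne) hS)
    fun n h₀ h₁ => HomologicalComplex.isZero_double_X ψ hij n h₀ h₁

/-- Composing a contraction of `P` with degreewise sections of `g` yields a chain map splitting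
`g`. -/
lemma retractionComp_of_isContractible {C P : CochainComplex (ModuleCat.{w} A) ℤ} (g : C ⟶ P)
    (hP : ∀ i, Module.Projective A (P.X i)) (hg : ∀ i, Function.Surjective (g.f i))
    (h : IsContractible P) : RetractionComp g := by
  obtain ⟨H⟩ := h
  have hσ : ∀ i, ∃ σ : P.X i ⟶ C.X i, σ ≫ g.f i = 𝟙 _ := fun i => by
    have := hP i
    obtain ⟨σ, hσ⟩ := Module.projective_lifting_property (g.f i).hom LinearMap.id (hg i)
    exact ⟨ModuleCat.ofHom σ, ModuleCat.hom_ext hσ⟩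
  choose σ hσ using hσ
  refine ⟨Homotopy.nullHomotopicMap fun i j => H.hom i j ≫ σ j, ?_⟩
  rw [Homotopy.nullHomotopicMap_comp]
  simp only [Category.assoc, hσ, Category.comp_id]
  ext1 i
  rw [H.comm i, HomologicalComplex.zero_f, add_zero]
  rfl

/-- A bounded above acyclic complex of projectives is contractible. -/
lemma isContractible_of_acyclic {P : CochainComplex (ModuleCat.{w} A) ℤ} (hP : IsCompMinusB P)
    (h : P.Acyclic) : IsContractible P := by
  obtain ⟨-, hproj, ⟨N, hN⟩, -⟩ := hP
  have : P.IsStrictlyLE N := (CochainComplex.isStrictlyLE_iff P N).2 fun i hi => hN i hi.le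
  have : ∀ n, Projective (P.X n) := fun n =>
    have := hproj n
    (IsProjective.iff_projective (P.X n)).1 this
  have := CochainComplex.isKProjective_of_projective P N
  exact CochainComplex.IsKProjective.nonempty_homotopy_zero _ h

/-- If all chain maps to `P` which are not retractions are null-homotopic and `P` is not acyclic,
then `P` is concentrated in the degree of any nonzero cohomology class `[x]`: the map from a stalk
complex `A → P` which represents `[x]` is not null-homotopic, so `P` is a retract of a stalk
complex. -/
lemma exists_concentrated {P : CochainComplex (ModuleCat.{w} A) ℤ} (hac : ¬ P.Acyclic)
    (hnull : ∀ M : CochainComplex (ModuleCat.{w} A) ℤ, IsCompMinusB M →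
      ∀ f : M ⟶ P, ¬ RetractionComp f → Nonempty (Homotopy f 0)) :
    ∃ i, Nontrivial (P.X i) ∧ ∀ j, j ≠ i → IsZero (P.X j) := by
  obtain ⟨i, hi⟩ := not_forall.1 hac
  rw [P.exactAt_iff' (i - 1) i (i + 1) (by simp) (by simp),
    ShortComplex.moduleCat_exact_iff] at hi
  push Not at hi
  obtain ⟨x, hx, hx'⟩ := hi
  change P.X i at x
  change P.d i (i + 1) x = 0 at hx
  change ∀ y : P.X (i - 1), P.d (i - 1) i y ≠ x at hx'
  have hnt : Nontrivial (P.X i) := ⟨x, 0, fun h => hx' 0 (by rw [map_zero, h])⟩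
  refine ⟨i, hnt, ?_⟩
  let φ : regularModule.{w} A ⟶ P.X i :=
    ModuleCat.ofHom ((LinearMap.toSpanSingleton A (P.X i) x).comp ULift.moduleEquiv.toLinearMap)
  have hφ : φ ⟨1⟩ = x := one_smul A x
  let f := HomologicalComplex.mkHomFromSingle (K := P) (j := i) φ (by
    rintro k rfl
    ext a
    change P.d i (i + 1) (a.down • x) = 0
    rw [map_smul, hx, smul_zero])
  by_cases hf : RetractionComp f
  · obtain ⟨s, hs⟩ := hf
    intro j hj
    rw [IsZero.iff_id_eq_zero]
    have h := HomologicalComplex.congr_hom hs j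
    rw [HomologicalComplex.comp_f, HomologicalComplex.id_f] at h
    rw [← h, (HomologicalComplex.isZero_single_obj_X _ _ _ _ hj).eq_of_tgt (s.f j) 0, zero_comp]
  · obtain ⟨H⟩ := hnull _ (isCompMinusB_single i) f hf
    have h := H.comm i
    rw [dNext_eq _ (show (ComplexShape.up ℤ).Rel i (i + 1) from rfl),
      prevD_eq _ (show (ComplexShape.up ℤ).Rel (i - 1) i by simp),
      HomologicalComplex.single_obj_d, zero_comp, zero_add, HomologicalComplex.zero_f, add_zero,
      HomologicalComplex.mkHomFromSingle_f, ← Iso.eq_inv_comp] at h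
    refine absurd ?_ (hx' (((HomologicalComplex.singleObjXSelf (ComplexShape.up ℤ) i
      (regularModule.{w} A)).inv ≫ H.hom i (i - 1)) ⟨1⟩))
    rw [← hφ, h, ← Category.assoc]
    rfl

/-- Over `P` concentrated in degree `i`, a map of stalk complexes `A → P` is null-homotopic only
if it is zero. -/
lemma exists_section_of_concentrated {P : CochainComplex (ModuleCat.{w} A) ℤ} {i : ℤ}
    (hnull : ∀ M : CochainComplex (ModuleCat.{w} A) ℤ, IsCompMinusB M →
      ∀ f : M ⟶ P, ¬ RetractionComp f → Nonempty (Homotopy f 0))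
    (hi : ∀ j, j ≠ i → IsZero (P.X j)) (θ : regularModule.{w} A ⟶ P.X i) (hθ : θ ≠ 0) :
    ∃ s : P.X i ⟶ regularModule.{w} A, s ≫ θ = 𝟙 _ := by
  let f := HomologicalComplex.mkHomFromSingle (K := P) (j := i) θ (by
    rintro k rfl
    exact (hi (i + 1) (by lia)).eq_of_tgt _ _)
  by_cases hf : RetractionComp f
  · obtain ⟨s, hs⟩ := hf
    have h := HomologicalComplex.congr_hom hs i
    rw [HomologicalComplex.comp_f, HomologicalComplex.id_f,
      HomologicalComplex.mkHomFromSingle_f, ← Category.assoc] at h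
    exact ⟨_, h⟩
  · obtain ⟨H⟩ := hnull _ (isCompMinusB_single i) f hf
    have h := H.comm i
    rw [dNext_eq _ (show (ComplexShape.up ℤ).Rel i (i + 1) from rfl),
      prevD_eq _ (show (ComplexShape.up ℤ).Rel (i - 1) i by simp),
      HomologicalComplex.single_obj_d, zero_comp, zero_add, HomologicalComplex.zero_f, add_zero,
      HomologicalComplex.mkHomFromSingle_f, ← Iso.eq_inv_comp,
      (hi (i - 1) (by lia)).eq_of_tgt (H.hom i (i - 1)) 0, zero_comp, comp_zero] at h
    exact absurd h hθ

/-- For `P` concentrated in degree `i` and a map `ψ : P.X i → A`, the identity of `P.X i` induces a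
chain map from the two-term complex `ψ` to `P`. It is a retraction only if `ψ = 0`, and
null-homotopic only if `ψ` has a left inverse. -/
lemma exists_retraction_of_concentrated {P : CochainComplex (ModuleCat.{w} A) ℤ} {i : ℤ}
    (hP : IsCompMinusB P)
    (hnull : ∀ M : CochainComplex (ModuleCat.{w} A) ℤ, IsCompMinusB M →
      ∀ f : M ⟶ P, ¬ RetractionComp f → Nonempty (Homotopy f 0))
    (hi : ∀ j, j ≠ i → IsZero (P.X j)) (ψ : P.X i ⟶ regularModule.{w} A) (hψ : ψ ≠ 0) :
    ∃ h : regularModule.{w} A ⟶ P.X i, ψ ≫ h = 𝟙 _ := by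
  have hrel : (ComplexShape.up ℤ).Rel i (i + 1) := rfl
  have hne : i ≠ i + 1 := by lia
  have hz := hi (i + 1) hne.symm
  let f := HomologicalComplex.mkHomFromDouble (f := ψ) hrel hne (K := P) (𝟙 _) 0
    (hz.eq_of_tgt _ _) (fun _ _ => zero_comp)
  by_cases hf : RetractionComp f
  · obtain ⟨r, hr⟩ := hf
    have h := HomologicalComplex.congr_hom hr i
    rw [HomologicalComplex.comp_f, HomologicalComplex.id_f,
      HomologicalComplex.mkHomFromDouble_f₀, Category.comp_id] at h
    have hc := r.comm i (i + 1)
    rw [HomologicalComplex.double_d ψ hrel hne, ← Category.assoc, h, Category.id_comp,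
      hz.eq_of_tgt (P.d i (i + 1)) 0, zero_comp, Iso.comp_inv_eq, zero_comp] at hc
    exact absurd hc hψ
  · obtain ⟨H⟩ := hnull _ (isCompMinusB_double ψ hrel hne ⟨hP.1 i, hP.2.1 i⟩
      ⟨inferInstance, Module.Projective.of_equiv ULift.moduleEquiv.symm⟩) f hf
    have h := H.comm i
    rw [dNext_eq _ hrel,
      prevD_eq _ (show (ComplexShape.up ℤ).Rel (i - 1) i by simp),
      (hi (i - 1) (by lia)).eq_of_tgt (H.hom i (i - 1)) 0, zero_comp, add_zero,
      HomologicalComplex.zero_f, add_zero, HomologicalComplex.mkHomFromDouble_f₀,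
      HomologicalComplex.double_d ψ hrel hne, Category.assoc, Category.assoc,
      Iso.cancel_iso_hom_left] at h
    exact ⟨_, h.symm⟩

end ComplexPart

/-- If `A` is an indecomposable finite-dimensional `k`-algebra and there is an
Auslander-Reiten sequence `0 → E → C → P → 0` in `Comp^{-,b}(P)` with contractible middle
term `C`, then `A` is a simple algebra. -/
theorem simple_of_AR_sequence_with_contractible_middle_term
    (hA : ∀ (B C : Type) [Ring B] [Ring C] [Algebra k B] [Algebra k C],
      Nontrivial B → Nontrivial C → IsEmpty (A ≃ₐ[k] (B × C)))
    (E C P : CochainComplex (ModuleCat A) ℤ)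
    (hE : IsCompMinusB E) (hC : IsCompMinusB C) (hP : IsCompMinusB P)
    (u : E ⟶ C) (g : C ⟶ P) (hAR : IsARSeq u g) (hmid : IsContractible C) :
    IsSimpleRing A := by
  obtain ⟨-, hg, -, hsplit, -, -, hfac⟩ := hAR
  have hnull : ∀ M, IsCompMinusB M → ∀ f : M ⟶ P, ¬ RetractionComp f →
      Nonempty (Homotopy f 0) := by
    intro M hM f hf
    obtain ⟨f', rfl⟩ := hfac M hM f hf
    obtain ⟨H⟩ := hmid
    exact ⟨(Homotopy.ofEq (by simp)).trans
      (((H.compLeft f').compRight g).trans (Homotopy.ofEq (by simp)))⟩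
  have hac : ¬ P.Acyclic := fun h =>
    hsplit (retractionComp_of_isContractible g hP.2.1 hg (isContractible_of_acyclic hP h))
  obtain ⟨i, hnt, hi⟩ := exists_concentrated hac hnull
  have : IsArtinianRing A := IsArtinianRing.of_finite k A
  refine isSimpleRing_of_splitting (k := k) (Q := P.X i) hA (fun θ hθ => ?_) (fun ψ hψ => ?_)
  · obtain ⟨s, hs⟩ := exists_section_of_concentrated hnull hi
      (ModuleCat.ofHom (θ ∘ₗ ULift.moduleEquiv.toLinearMap)) fun h => hθ <| by
        ext
        exact LinearMap.congr_fun (congrArg ModuleCat.Hom.hom h) ⟨1⟩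
    exact ⟨ULift.moduleEquiv.toLinearMap ∘ₗ s.hom, congrArg ModuleCat.Hom.hom hs⟩
  · obtain ⟨h, hh⟩ := exists_retraction_of_concentrated hP hnull hi
      (ModuleCat.ofHom (ULift.moduleEquiv.symm.toLinearMap ∘ₗ ψ)) fun h => hψ <| by
        ext q
        exact congrArg ULift.down (LinearMap.congr_fun (congrArg ModuleCat.Hom.hom h) q)
    exact ⟨h.hom ∘ₗ ULift.moduleEquiv.symm.toLinearMap, congrArg ModuleCat.Hom.hom hh⟩
end
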